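/- arXiv:1306.3707 — 3 statements merged into one kernel-verified Lean document; each statement's English description precedes it below -/
import Mathlib

section
/- For every integer k ≥ 2 and every utilization ρ with 0 < ρ < 1/k, the inequality 1/(k(1 - kρ)) < 1/(1 - ρ) holds if and only if ρ < 1/(k + 1). (Generalization of Theorem 1 to k-way replication with exponential service: the threshold load is 1/(k+1).) -/
theorem one_sub_lt_mul_one_sub_mul_iff {R : Type*} [CommRing R] [LinearOrder R]
    [IsStrictOrderedRing R] {k ρ : R} (hk : 1 < k) :
    1 - ρ < k * (1 - k * ρ) ↔ ρ * (k + 1) < 1 := by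
  -- `k = 1` means no replication, so the difference of the two rates is divisible by `k - 1`.
  have rate_gain : k * (1 - k * ρ) - (1 - ρ) = (k - 1) * (1 - ρ * (k + 1)) := by ring
  rw [← sub_pos, rate_gain, mul_pos_iff_of_pos_left (sub_pos.mpr hk), sub_pos]

theorem threshold_load_k_replication_general {K : Type*} [Field K] [LinearOrder K]
    [IsStrictOrderedRing K] {k ρ : K} (hk : 1 < k) (hρ : ρ < 1 / k) :
    1 / (k * (1 - k * ρ)) < 1 / (1 - ρ) ↔ ρ < 1 / (k + 1) := by
  have k_pos : 0 < k := one_pos.trans hk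
  have replicated_rate_pos : 0 < k * (1 - k * ρ) :=
    mul_pos k_pos (sub_pos.mpr ((lt_div_iff₀' k_pos).mp hρ))
  have unreplicated_rate_pos : 0 < 1 - ρ :=
    sub_pos.mpr (hρ.trans ((div_lt_one k_pos).mpr hk))
  rw [one_div_lt_one_div replicated_rate_pos unreplicated_rate_pos,
    one_sub_lt_mul_one_sub_mul_iff hk, lt_div_iff₀ (add_pos k_pos one_pos)]

/-- Generalization of Theorem 1 to `k`-way replication with unit-mean exponential
service: for every integer `k ≥ 2` and utilization `0 < ρ < 1/k`, the replicated mean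
response time `1/(k(1-kρ))` beats the unreplicated one `1/(1-ρ)` iff `ρ < 1/(k+1)`. -/
theorem threshold_load_k_replication (k : ℕ) (hk : 2 ≤ k) (ρ : ℝ) (h0 : 0 < ρ)
    (h1 : ρ < 1 / (k : ℝ)) :
    1 / ((k : ℝ) * (1 - (k : ℝ) * ρ)) < 1 / (1 - ρ) ↔ ρ < 1 / ((k : ℝ) + 1) :=
  threshold_load_k_replication_general (Nat.one_lt_cast.mpr hk) h1
end

section
/- In the unit-mean exponential-service model with 2-way replication and a fixed client-side overhead c per replicated request: if c ≥ 1/2, then for every ρ with 0 ≤ ρ < 1/2, the replicated mean response time with overhead satisfies c + 1/(2(1 - 2ρ)) ≥ 1/(1 - ρ); that is, replication never strictly improves mean response time at any load. -/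
/-!
Write `T ρ = 1 / (1 - ρ)`. Replicating every request doubles the load, and taking the faster of two
copies halves the mean response time, which becomes `T (2 * ρ) / 2`. As `T` is convex,
`T ρ ≤ T 0 / 2 + T (2 * ρ) / 2`, so an overhead of `T 0 / 2 = 1 / 2` cancels any gain.
-/

section LinearOrderedField

variable {K : Type*} [Field K] [LinearOrder K] [IsStrictOrderedRing K]

theorem convexOn_inv_Ioi : ConvexOn K (Set.Ioi 0) fun x : K => x⁻¹ := by
  simpa only [zpow_neg_one] using convexOn_zpow (𝕜 := K) (-1)

theorem inv_half_add_half_le {a b : K} (ha : 0 < a) (hb : 0 < b) :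
    (a / 2 + b / 2)⁻¹ ≤ a⁻¹ / 2 + b⁻¹ / 2 := by
  have half_nonneg : (0 : K) ≤ 2⁻¹ := by positivity
  have half_add_half : (2⁻¹ : K) + 2⁻¹ = 1 := by norm_num
  simpa only [smul_eq_mul, inv_mul_eq_div] using
    convexOn_inv_Ioi.2 ha hb half_nonneg half_nonneg half_add_half

theorem overhead_kills_replication_general {c ρ : K} (hc : 1 / 2 ≤ c) (hρ : ρ < 1 / 2) :
    1 / (1 - ρ) ≤ c + 1 / (2 * (1 - 2 * ρ)) := by
  have slack_pos : 0 < 1 - 2 * ρ := by linarith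
  calc
    1 / (1 - ρ) = (1 / 2 + (1 - 2 * ρ) / 2)⁻¹ := by rw [one_div]; congr 1; ring
    _ ≤ 1⁻¹ / 2 + (1 - 2 * ρ)⁻¹ / 2 := inv_half_add_half_le one_pos slack_pos
    _ = 1 / 2 + 1 / (2 * (1 - 2 * ρ)) := by field_simp
    _ ≤ c + 1 / (2 * (1 - 2 * ρ)) := by gcongr

end LinearOrderedField

/-- With unit-mean exponential service, 2-way replication and a fixed client-side
overhead `c ≥ 1/2` per replicated request, replication never strictly improves mean
response time: for every load `0 ≤ ρ < 1/2`, `c + 1/(2(1-2ρ)) ≥ 1/(1-ρ)`. -/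
theorem overhead_kills_replication (c : ℝ) (hc : 1 / 2 ≤ c) :
    ∀ ρ : ℝ, 0 ≤ ρ → ρ < 1 / 2 → c + 1 / (2 * (1 - 2 * ρ)) ≥ 1 / (1 - ρ) := by
  intro ρ _ hρ
  exact overhead_kills_replication_general hc hρ
end

section
/- In the unit-mean exponential-service model with 2-way replication and a fixed client-side overhead c per replicated request: if 0 ≤ c < 1/2, then there exists ρ₀ with 0 < ρ₀ < 1/2 such that for all ρ with 0 ≤ ρ < ρ₀, c + 1/(2(1 - 2ρ)) < 1/(1 - ρ); that is, replication strictly improves mean response time at all sufficiently low loads. -/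
/-!
At zero load nothing queues, so `k`-way replication changes the mean response time from `1` to
`c + 1 / k`, which is a strict gain when `c < 1 - 1 / k`. Both mean response times are continuous
in the load at `0`, so the strict gain persists on an interval `[0, ρ₀)`.
-/

open Set Topology

theorem exists_mem_Ioo_forall_mem_Ico_lt {X Y : Type*} [TopologicalSpace X] [LinearOrder X]
    [OrderTopology X] [DenselyOrdered X] [TopologicalSpace Y] [LinearOrder Y]
    [OrderClosedTopology Y] {f g : X → Y} {a b : X} (hab : a < b)
    (hf : ContinuousWithinAt f (Ici a) a) (hg : ContinuousWithinAt g (Ici a) a)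
    (hfg : f a < g a) :
    ∃ u ∈ Ioo a b, ∀ x ∈ Ico a u, f x < g x := by
  obtain ⟨b', hab', hb'b⟩ := exists_between hab
  have hlt : ∀ᶠ x in 𝓝[≥] a, f x < g x := hf.eventually_lt hg hfg
  obtain ⟨u, ⟨hau, hub'⟩, hu⟩ := (mem_nhdsGE_iff_exists_mem_Ioc_Ico_subset hab').mp hlt
  exact ⟨u, ⟨hau, hub'.trans_lt hb'b⟩, fun _ hx ↦ hu hx⟩

/-- Mean response time, without client-side overhead, of `k`-way replication with unit-mean
exponential service at per-server load `ρ` before replication: replication raises the load to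
`k * ρ`, so each copy has an exponential response time of rate `1 - k * ρ`, and the fastest of `k`
independent copies is exponential of rate `k * (1 - k * ρ)`. The value represents a response time
only for `k * ρ < 1`; `k` is real so that no casts occur. -/
noncomputable def meanResponse (k ρ : ℝ) : ℝ :=
  1 / (k * (1 - k * ρ))

theorem meanResponse_zero_right (k : ℝ) : meanResponse k 0 = 1 / k := by
  simp only [meanResponse, mul_zero, sub_zero, mul_one]

theorem continuousAt_meanResponse {k ρ : ℝ} (hk : k ≠ 0) (hρ : k * ρ ≠ 1) :
    ContinuousAt (meanResponse k) ρ := by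
  have hden : k * (1 - k * ρ) ≠ 0 := mul_ne_zero hk (sub_ne_zero.mpr hρ.symm)
  exact continuousAt_const.div (by fun_prop) hden

theorem small_overhead_positive_threshold_general {k c : ℝ} (hk : 0 < k) (hc : c < 1 - 1 / k) :
    ∃ ρ₀ : ℝ, 0 < ρ₀ ∧ ρ₀ < 1 / k ∧
      ∀ ρ : ℝ, 0 ≤ ρ → ρ < ρ₀ → c + meanResponse k ρ < meanResponse 1 ρ := by
  have hcont_k : ContinuousAt (fun ρ ↦ c + meanResponse k ρ) 0 :=
    continuousAt_const.add (continuousAt_meanResponse hk.ne' (by simp))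
  have hcont_one : ContinuousAt (meanResponse 1) 0 :=
    continuousAt_meanResponse one_ne_zero (by simp)
  have hgain : c + meanResponse k 0 < meanResponse 1 0 := by
    rw [meanResponse_zero_right, meanResponse_zero_right, one_div_one]
    exact lt_sub_iff_add_lt.mp hc
  obtain ⟨ρ₀, ⟨hpos, hlt⟩, himproves⟩ := exists_mem_Ioo_forall_mem_Ico_lt (one_div_pos.mpr hk)
    hcont_k.continuousWithinAt hcont_one.continuousWithinAt hgain
  exact ⟨ρ₀, hpos, hlt, fun ρ hρ hρρ₀ ↦ himproves ρ ⟨hρ, hρρ₀⟩⟩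

/-- With unit-mean exponential service, 2-way replication and a fixed client-side
overhead `0 ≤ c < 1/2` per replicated request, replication strictly improves mean
response time at all sufficiently low loads: there is a threshold `ρ₀ ∈ (0, 1/2)`
such that `c + 1/(2(1-2ρ)) < 1/(1-ρ)` whenever `0 ≤ ρ < ρ₀`. -/
theorem small_overhead_positive_threshold (c : ℝ) (hc0 : 0 ≤ c) (hc : c < 1 / 2) :
    ∃ ρ₀ : ℝ, 0 < ρ₀ ∧ ρ₀ < 1 / 2 ∧
      ∀ ρ : ℝ, 0 ≤ ρ → ρ < ρ₀ → c + 1 / (2 * (1 - 2 * ρ)) < 1 / (1 - ρ) := by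
  simpa only [meanResponse, one_mul] using
    small_overhead_positive_threshold_general two_pos (hc.trans_eq (sub_half 1).symm)
end
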